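/- For every positive integer n, θ(n) = ∑_{t ≥ 2, gcd(t, p_n#) = 1} 2^{-t}, where the sum is over all integers t ≥ 2 that are coprime to p_n#. -/

import Mathlib

/-!
For `d ≥ 1` the geometric series gives `1 / (2 ^ d - 1) = ∑_{t ≥ 1, d ∣ t} 2 ^ (-t)`. Weighting by
`μ d` and summing over the divisors `d` of `P = p_n#`, the coefficient of `2 ^ (-t)` becomes
`∑_{d ∣ gcd(t, P)} μ d`, which is `1` if `t` is coprime to `P` and `0` otherwise. The summand
`-1/2` in `theta` removes the term `t = 1`.
-/

open scoped BigOperators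

/-- `nthPrime k` is the k-th prime with 1-based indexing: p₁ = 2, p₂ = 3, ... -/
noncomputable def nthPrime (k : ℕ) : ℕ := Nat.nth Nat.Prime (k - 1)

/-- `primorialN n` is `p_n# = p₁ ⬝ p₂ ⋯ p_n`, the product of the first `n` primes. -/
noncomputable def primorialN (n : ℕ) : ℕ := ∏ i ∈ Finset.range n, Nat.nth Nat.Prime i

/-- `theta n = -1/2 + ∑_{d ∣ p_n#} μ(d)/(2^d - 1)`. -/
noncomputable def theta (n : ℕ) : ℝ :=
  -1/2 + ∑ d ∈ (primorialN n).divisors,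
    ((ArithmeticFunction.moebius d : ℤ) : ℝ) / (2 ^ d - 1)

lemma primorialN_ne_zero (n : ℕ) : primorialN n ≠ 0 :=
  Finset.prod_ne_zero_iff.mpr fun i _ => (Nat.prime_nth_prime i).ne_zero

lemma hasSum_multiples {d : ℕ} (hd : d ≠ 0) :
    HasSum (fun t : ℕ => if t ≠ 0 ∧ d ∣ t then (1 / 2 : ℝ) ^ t else 0) (1 / (2 ^ d - 1)) := by
  have hinj : Function.Injective (fun k : ℕ => d * (k + 1)) := fun a b h => by
    have := Nat.eq_of_mul_eq_mul_left (Nat.pos_of_ne_zero hd) h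
    omega
  refine (hinj.hasSum_iff ?_).mp ?_
  · intro t ht
    refine if_neg ?_
    rintro ⟨ht0, k, rfl⟩
    obtain ⟨j, rfl⟩ := Nat.exists_eq_succ_of_ne_zero (right_ne_zero_of_mul ht0)
    exact ht ⟨j, rfl⟩
  · have hlt : (1 / 2 : ℝ) ^ d < 1 := pow_lt_one₀ (by norm_num) (by norm_num) hd
    have hg := (hasSum_geometric_of_lt_one (by positivity) hlt).mul_left ((1 / 2 : ℝ) ^ d)
    convert! hg using 1
    · funext k
      simp only [Function.comp_apply]
      rw [if_pos ⟨mul_ne_zero hd k.succ_ne_zero, dvd_mul_right _ _⟩, pow_mul, pow_succ']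
    · have h2 : (1 : ℝ) < 2 ^ d := one_lt_pow₀ (by norm_num) hd
      have h3 : (2 : ℝ) ^ d - 1 ≠ 0 := by linarith
      rw [one_div_pow]
      field_simp

/-- Möbius detection of coprimality. -/
lemma sum_moebius_dvd {P : ℕ} (hP : P ≠ 0) (t : ℕ) :
    ∑ d ∈ P.divisors, (if d ∣ t then ((ArithmeticFunction.moebius d : ℤ) : ℝ) else 0)
      = if Nat.gcd t P = 1 then 1 else 0 := by
  have hdiv : P.divisors.filter (· ∣ t) = (Nat.gcd t P).divisors := by
    ext d
    simp only [Finset.mem_filter, Nat.mem_divisors, Nat.dvd_gcd_iff, ne_eq, Nat.gcd_eq_zero_iff]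
    tauto
  rw [← Finset.sum_filter, hdiv, ← Int.cast_sum, ← ArithmeticFunction.coe_mul_zeta_apply,
    ArithmeticFunction.moebius_mul_coe_zeta, ArithmeticFunction.one_apply]
  split_ifs <;> simp

/-- For every positive integer `n`,
`θ(n) = ∑_{t ≥ 2, gcd(t, p_n#) = 1} 2^(-t)`. -/
theorem theta_eq_coprime_sum (n : ℕ) (hn : 0 < n) :
    theta n = ∑' t : {t : ℕ // 2 ≤ t ∧ Nat.gcd t (primorialN n) = 1},
        (2 : ℝ) ^ (-(t.val : ℤ)) := by
  set P := primorialN n with hPdef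
  have hP : P ≠ 0 := primorialN_ne_zero n
  have hsum := hasSum_sum (s := P.divisors) fun d hd =>
    (hasSum_multiples (Nat.pos_of_mem_divisors hd).ne').mul_left
      ((ArithmeticFunction.moebius d : ℤ) : ℝ)
  have hall := (hasSum_ite_eq (1 : ℕ) (-1 / 2 : ℝ)).add hsum
  symm
  refine HasSum.tsum_eq (f := fun t : {t : ℕ // 2 ≤ t ∧ Nat.gcd t P = 1} =>
    (2 : ℝ) ^ (-(t.val : ℤ))) ?_
  refine (hasSum_subtype_iff_indicator (s := {t : ℕ | 2 ≤ t ∧ Nat.gcd t P = 1})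
    (f := fun t : ℕ => (2 : ℝ) ^ (-(t : ℤ)))).mpr ?_
  convert! hall using 1
  · funext t
    have hcoeff : ∑ d ∈ P.divisors, ((ArithmeticFunction.moebius d : ℤ) : ℝ) *
        (if t ≠ 0 ∧ d ∣ t then (1 / 2 : ℝ) ^ t else 0)
        = if t ≠ 0 ∧ Nat.gcd t P = 1 then (1 / 2 : ℝ) ^ t else 0 := by
      by_cases ht : t = 0
      · simp [ht]
      · have := congrArg (· * (1 / 2 : ℝ) ^ t) (sum_moebius_dvd hP t)
        simpa [ht, Finset.sum_mul] using this
    rw [hcoeff]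
    have hpow : (2 : ℝ) ^ (-(t : ℤ)) = (1 / 2 : ℝ) ^ t := by simp
    simp only [Set.indicator_apply, Set.mem_ofPred_eq, hpow]
    rcases t with _ | _ | t
    · simp
    · norm_num
    · simp
  · simp [theta, ← hPdef, div_eq_mul_inv]
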